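/- The GP-DDF⁺ predictive covariance equals the PIC predictive covariance in the different-vehicle case: if τ_s = i ≠ j = τ_{s'}, then σ_{ss'} − Γ̃_{sD}(Γ_DD + Λ)⁻¹ Γ̃_{Ds'} = Σ_{ss'|U} + γ_{sU}^i Σ̈_UU⁻¹ γ_{Us'}^j, where Σ_{ss'|U} ≜ σ_{ss'} − Σ_{sU} Σ_UU⁻¹ Σ_{Us'}. -/

import Mathlib

open Matrix

lemma core_aux {U D : Type*} [Fintype U] [DecidableEq U] [Fintype D] [DecidableEq D]
    (a : Matrix Unit U ℝ) (b : Matrix U Unit ℝ) (A Ai S Si : Matrix U U ℝ)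
    (B : Matrix U D ℝ) (C : Matrix D U ℝ) (Λ Λi : Matrix D D ℝ)
    (e : Matrix Unit D ℝ) (f : Matrix D Unit ℝ)
    (hA : A * Ai = 1) (hA' : Ai * A = 1) (hS : S * Si = 1) (hS' : Si * S = 1)
    (hL : Λ * Λi = 1) (hSd : S = A + B * Λi * C)
    (hef : e * Λi * f = 0) :
    (a * Ai * B + e) * (C * Ai * B + Λ)⁻¹ * (C * Ai * b + f)
      = a * Ai * b - (a - e * Λi * C) * Si * (b - B * Λi * f) := by
  have hQ : B * Λi * C = S - A := by rw [hSd]; abel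
  have hBN : B * (Λi - Λi * C * Si * B * Λi) = A * Si * B * Λi := by
    have : B * (Λi - Λi * C * Si * B * Λi) = B * Λi - (B * Λi * C) * Si * B * Λi := by
      simp only [Matrix.mul_sub, Matrix.mul_assoc]
    rw [this, hQ]
    simp only [Matrix.sub_mul, hS, Matrix.one_mul]
    abel
  have hM : (C * Ai * B + Λ)⁻¹ = Λi - Λi * C * Si * B * Λi := by
    apply Matrix.inv_eq_right_inv
    have h1 : C * Ai * B * (Λi - Λi * C * Si * B * Λi) = C * Si * B * Λi := by
      rw [Matrix.mul_assoc _ B, hBN]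
      calc C * Ai * (A * Si * B * Λi) = C * (Ai * A) * Si * B * Λi := by
            simp only [Matrix.mul_assoc]
        _ = _ := by rw [hA', Matrix.mul_one]
    have h2 : Λ * (Λi - Λi * C * Si * B * Λi) = 1 - C * Si * B * Λi := by
      calc _ = Λ * Λi - (Λ * Λi) * C * Si * B * Λi := by
            simp only [Matrix.mul_sub, Matrix.mul_assoc]
        _ = _ := by rw [hL, Matrix.one_mul]
    rw [Matrix.add_mul, h1, h2]; abel
  have h3 : (a * Ai * B + e) * (Λi - Λi * C * Si * B * Λi)
      = e * Λi + (a - e * Λi * C) * Si * B * Λi := by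
    rw [Matrix.add_mul, Matrix.mul_assoc _ B, hBN]
    have : a * Ai * (A * Si * B * Λi) = a * Si * B * Λi := by
      calc a * Ai * (A * Si * B * Λi) = a * (Ai * A) * Si * B * Λi := by
            simp only [Matrix.mul_assoc]
        _ = _ := by rw [hA', Matrix.mul_one]
    rw [this]
    simp only [Matrix.mul_sub, Matrix.sub_mul, Matrix.mul_assoc]
    abel
  have h4 : Si * (B * Λi * C) * Ai = Ai - Si := by
    rw [hQ, Matrix.mul_sub, hS', Matrix.sub_mul, Matrix.one_mul, Matrix.mul_assoc, hA,
      Matrix.mul_one]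
  rw [hM, h3]
  generalize hg : a - e * Λi * C = g
  have ha : a = g + e * Λi * C := by rw [← hg]; abel
  calc _ = e * Λi * C * Ai * b + e * Λi * f + g * (Si * (B * Λi * C) * Ai) * b
        + g * Si * B * Λi * f := by
        simp only [Matrix.mul_add, Matrix.add_mul, Matrix.mul_assoc]; abel
    _ = _ := by
        rw [h4, hef, ha]
        simp only [Matrix.mul_add, Matrix.add_mul, Matrix.mul_sub, Matrix.sub_mul,
          Matrix.mul_assoc]
        abel


/-- Theorem 1B (covariance part, different-vehicle case `τ_s = i ≠ j = τ_{s'}`):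
`σ_{ss'} − Γ̃_{sD}(Γ_DD + Λ)⁻¹ Γ̃_{Ds'} = Σ_{ss'|U} + γ_{sU}^i Σ̈_UU⁻¹ γ_{Us'}^j`,
where `Σ_{ss'|U} = σ_{ss'} − Σ_{sU} Σ_UU⁻¹ Σ_{Us'}`. -/
theorem stmt8 {K U : Type*} [Fintype K] [DecidableEq K] [Fintype U] [DecidableEq U]
    {δ : K → Type*} [∀ k, Fintype (δ k)] [∀ k, DecidableEq (δ k)]
    (i j : K) (hij : i ≠ j) (σss' : Matrix Unit Unit ℝ)
    (SsU : Matrix Unit U ℝ) (SUs' : Matrix U Unit ℝ) (SUU : Matrix U U ℝ)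
    (hUU : SUU.PosDef)
    (SsD : ∀ k, Matrix Unit (δ k) ℝ) (SDs' : ∀ k, Matrix (δ k) Unit ℝ)
    (SUD : ∀ k, Matrix U (δ k) ℝ)
    (L : ∀ k, Matrix (δ k) (δ k) ℝ) (hL : ∀ k, (L k).PosDef) :
    σss'
      - (Matrix.of fun (_ : Unit) (d : Sigma δ) =>
            if d.1 = i then SsD d.1 () d.2 else (SsU * SUU⁻¹ * SUD d.1) () d.2)
        * ((Matrix.of fun (d : Sigma δ) (u : U) => SUD d.1 u d.2)
             * SUU⁻¹ * (Matrix.of fun (u : U) (d : Sigma δ) => SUD d.1 u d.2)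
           + Matrix.blockDiagonal' L)⁻¹
        * (Matrix.of fun (d : Sigma δ) (_ : Unit) =>
            if d.1 = j then SDs' d.1 d.2 () else ((SUD d.1)ᵀ * SUU⁻¹ * SUs') d.2 ())
    = (σss' - SsU * SUU⁻¹ * SUs')
      + (SsU + SsU * SUU⁻¹ * (SUD i * (L i)⁻¹ * (SUD i)ᵀ)
          - SsD i * (L i)⁻¹ * (SUD i)ᵀ)
        * (SUU + ∑ k, SUD k * (L k)⁻¹ * (SUD k)ᵀ)⁻¹
        * (SUs' + SUD j * (L j)⁻¹ * (SUD j)ᵀ * SUU⁻¹ * SUs'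
            - SUD j * (L j)⁻¹ * SDs' j) := by

  set B : Matrix U (Sigma δ) ℝ := Matrix.of fun (u : U) (d : Sigma δ) => SUD d.1 u d.2 with hB
  have hBt : (Matrix.of fun (d : Sigma δ) (u : U) => SUD d.1 u d.2) = Bᵀ := by
    ext d u; rfl
  set Li : Matrix (Sigma δ) (Sigma δ) ℝ := Matrix.blockDiagonal' (fun k => (L k)⁻¹) with hLi
  let e : Matrix Unit (Sigma δ) ℝ := Matrix.of fun _ d =>
    if d.1 = i then (SsD d.1 - SsU * SUU⁻¹ * SUD d.1) () d.2 else 0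
  let f : Matrix (Sigma δ) Unit ℝ := Matrix.of fun d _ =>
    if d.1 = j then (SDs' d.1 - (SUD d.1)ᵀ * SUU⁻¹ * SUs') d.2 () else 0
  have hLL : Matrix.blockDiagonal' L * Li = 1 := by
    rw [hLi, ← Matrix.blockDiagonal'_mul, ← Matrix.blockDiagonal'_one]
    congr 1
    funext k
    exact Matrix.mul_nonsing_inv _ ((Matrix.isUnit_iff_isUnit_det _).1 (hL k).isUnit)
  have he : (Matrix.of fun (_ : Unit) (d : Sigma δ) =>
      if d.1 = i then SsD d.1 () d.2 else (SsU * SUU⁻¹ * SUD d.1) () d.2)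
      = SsU * SUU⁻¹ * B + e := by
    ext x ⟨k, d⟩
    have : (SsU * SUU⁻¹ * B) x ⟨k, d⟩ = (SsU * SUU⁻¹ * SUD k) () d := rfl
    rw [Matrix.add_apply, this]
    simp only [e, Matrix.of_apply, Matrix.sub_apply]
    split_ifs <;> ring
  have hf : (Matrix.of fun (d : Sigma δ) (_ : Unit) =>
      if d.1 = j then SDs' d.1 d.2 () else ((SUD d.1)ᵀ * SUU⁻¹ * SUs') d.2 ())
      = Bᵀ * SUU⁻¹ * SUs' + f := by
    ext ⟨k, d⟩ x
    have : (Bᵀ * SUU⁻¹ * SUs') ⟨k, d⟩ x = ((SUD k)ᵀ * SUU⁻¹ * SUs') d () := rfl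
    rw [Matrix.add_apply, this]
    simp only [f, Matrix.of_apply, Matrix.sub_apply]
    split_ifs <;> ring
  have hBLi : ∀ u k d, (B * Li) u ⟨k, d⟩ = (SUD k * (L k)⁻¹) u d := by
    intro u k d
    simp only [Matrix.mul_apply, Fintype.sum_sigma, hLi, hB, Matrix.of_apply]
    rw [Finset.sum_eq_single k]
    · simp [Matrix.blockDiagonal'_apply_eq]
    · intro k' _ hk
      apply Finset.sum_eq_zero
      intro d' _
      rw [Matrix.blockDiagonal'_apply_ne _ _ _ hk, mul_zero]
    · simp
  have heLi : ∀ x k d, (e * Li) x ⟨k, d⟩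
      = if k = i then ((SsD k - SsU * SUU⁻¹ * SUD k) * (L k)⁻¹) x d else 0 := by
    intro x k d
    rw [Matrix.mul_apply, Fintype.sum_sigma, Finset.sum_eq_single k]
    · split_ifs with h
      · rw [Matrix.mul_apply]
        simp [e, h, hLi, Matrix.blockDiagonal'_apply_eq]
      · simp [e, h]
    · intro k' _ hk
      apply Finset.sum_eq_zero
      intro d' _
      rw [hLi, Matrix.blockDiagonal'_apply_ne _ _ _ hk, mul_zero]
    · simp
  have hQ : B * Li * Bᵀ = ∑ k, SUD k * (L k)⁻¹ * (SUD k)ᵀ := by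
    ext u v
    rw [Matrix.mul_apply, Fintype.sum_sigma, Matrix.sum_apply]
    refine Finset.sum_congr rfl fun k _ => ?_
    rw [Matrix.mul_apply]
    refine Finset.sum_congr rfl fun d _ => ?_
    rw [hBLi]; rfl
  have hef : e * Li * f = 0 := by
    ext x y
    rw [Matrix.mul_apply]
    apply Finset.sum_eq_zero
    rintro ⟨k, d⟩ _
    rw [heLi]
    by_cases h : k = i
    · have : k ≠ j := fun h' => hij (h.symm.trans h')
      simp [f, this]
    · simp [h]
  have heC : e * Li * Bᵀ = (SsD i - SsU * SUU⁻¹ * SUD i) * (L i)⁻¹ * (SUD i)ᵀ := by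
    ext x u
    rw [Matrix.mul_apply, Fintype.sum_sigma, Finset.sum_eq_single i]
    · rw [Matrix.mul_apply]
      refine Finset.sum_congr rfl fun d _ => ?_
      rw [heLi, if_pos rfl]; rfl
    · intro k _ hk
      apply Finset.sum_eq_zero
      intro d _
      rw [heLi, if_neg hk, zero_mul]
    · simp
  have hBf : B * Li * f = SUD j * (L j)⁻¹ * (SDs' j - (SUD j)ᵀ * SUU⁻¹ * SUs') := by
    ext u x
    rw [Matrix.mul_apply, Fintype.sum_sigma, Finset.sum_eq_single j]
    · rw [Matrix.mul_apply]
      refine Finset.sum_congr rfl fun d _ => ?_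
      rw [hBLi]
      simp [f]
    · intro k _ hk
      apply Finset.sum_eq_zero
      intro d _
      simp [f, hk]
    · simp
  have hSpd : (SUU + ∑ k, SUD k * (L k)⁻¹ * (SUD k)ᵀ).PosDef := by
    apply hUU.add_posSemidef
    apply Matrix.posSemidef_sum
    intro k _
    have := (hL k).inv.posSemidef.mul_mul_conjTranspose_same (SUD k)
    rwa [Matrix.conjTranspose_eq_transpose_of_trivial] at this
  have uA := (Matrix.isUnit_iff_isUnit_det _).1 hUU.isUnit
  have uS := (Matrix.isUnit_iff_isUnit_det _).1 hSpd.isUnit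
  have key := core_aux SsU SUs' SUU SUU⁻¹ _ _ B Bᵀ (Matrix.blockDiagonal' L) Li e f
    (Matrix.mul_nonsing_inv _ uA) (Matrix.nonsing_inv_mul _ uA)
    (Matrix.mul_nonsing_inv _ uS) (Matrix.nonsing_inv_mul _ uS) hLL (by rw [hQ]) hef
  rw [hBt, he, hf, key, heC, hBf]
  have g1 : SsU + SsU * SUU⁻¹ * (SUD i * (L i)⁻¹ * (SUD i)ᵀ) - SsD i * (L i)⁻¹ * (SUD i)ᵀ
      = SsU - (SsD i - SsU * SUU⁻¹ * SUD i) * (L i)⁻¹ * (SUD i)ᵀ := by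
    simp only [Matrix.sub_mul, Matrix.mul_assoc]; abel
  have g2 : SUs' + SUD j * (L j)⁻¹ * (SUD j)ᵀ * SUU⁻¹ * SUs' - SUD j * (L j)⁻¹ * SDs' j
      = SUs' - SUD j * (L j)⁻¹ * (SDs' j - (SUD j)ᵀ * SUU⁻¹ * SUs') := by
    simp only [Matrix.mul_sub, Matrix.mul_assoc]; abel
  rw [g1, g2]
  abel
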